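/- Call x ∈ F^{21} (an F-coloring of the 5-element subsets of {1,…,7}) a permitted coloring of ∂Δ⁶ if for every p ∈ {1,…,7}, writing {1,…,7}\{p} = {q₁ < q₂ < q₃ < q₄ < q₅ < q₆}, one has (x(u_{q₁}^p), x(u_{q₂}^p), x(u_{q₃}^p)) · A^{(p)}[(q₁,q₂,q₃)→(q₄,q₅,q₆)] = (x(u_{q₄}^p), x(u_{q₅}^p), x(u_{q₆}^p)). Then the set of permitted colorings of ∂Δ⁶ is an F-linear subspace of F^{21} of dimension exactly 6, and it coincides with the span of the 21 edge vectors e_{ab}, {a,b} ⊆ {1,…,7}. -/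

import Mathlib

/-- The determinant `d_{ijk}` built from the columns `(α_i,β_i,γ_i)`, `(α_j,β_j,γ_j)`,
`(α_k,β_k,γ_k)`. -/
noncomputable def dd {F : Type*} [Field F] (al be ga : Fin 7 → F) (i j k : Fin 7) : F :=
  Matrix.det !![al i, al j, al k; be i, be j, be k; ga i, ga j, ga k]

/-- The ansatz matrix `A^{(p)}[(i₁,i₂,i₃)→(o₁,o₂,o₃)]`. -/
noncomputable def ansatz {F : Type*} [Field F] (al be ga : Fin 7 → F) (p : Fin 7)
    (inp out : Fin 3 → Fin 7) : Matrix (Fin 3) (Fin 3) F := fun a b =>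
  dd al be ga (inp (a + 1)) (out b) p * dd al be ga (inp (a + 2)) (out b) p /
    (dd al be ga (inp a) (inp (a + 1)) p * dd al be ga (inp a) (inp (a + 2)) p)

/-- The 5-element subsets of `{1,…,7}` (pentachora of `∂Δ⁶`); there are 21 of them, so
functions `Pent → F` form `F^{21}`. -/
def Pent : Type := {u : Finset (Fin 7) // u.card = 5}

/-- The edge vector `e_{ab}` evaluated at a subset `u ⊆ {1,…,7}`. -/
noncomputable def eVec {F : Type*} [Field F] (al be ga : Fin 7 → F) (a b : Fin 7)
    (u : Finset (Fin 7)) : F :=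
  if a ∈ u ∧ b ∈ u then
    dd al be ga a ((uᶜ.sort (· ≤ ·)).getD 0 a) ((uᶜ.sort (· ≤ ·)).getD 1 a) *
      dd al be ga b ((uᶜ.sort (· ≤ ·)).getD 0 a) ((uᶜ.sort (· ≤ ·)).getD 1 a)
  else 0

/-- `qs p` enumerates `{1,…,7} \ {p}` in increasing order: `q₁ < q₂ < ⋯ < q₆`. -/
def qs (p : Fin 7) (n : Fin 6) : Fin 7 :=
  if (n : ℕ) < (p : ℕ) then ⟨(n : ℕ), by have := n.isLt; omega⟩
  else ⟨(n : ℕ) + 1, by have := n.isLt; omega⟩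

lemma qs_ne (p : Fin 7) (n : Fin 6) : qs p n ≠ p := by
  unfold qs
  split <;> (intro h; have := congrArg Fin.val h; simp at this; omega)

/-- `u_q^p := {1,…,7} \ {p,q}` as a pentachoron. -/
def uPent (p q : Fin 7) (h : q ≠ p) : Pent :=
  ⟨({p, q} : Finset (Fin 7))ᶜ, by
    rw [Finset.card_compl, Finset.card_pair (Ne.symm h)]
    decide⟩

/-- `x : Pent → F` is a permitted coloring of `∂Δ⁶` if for every `p`, writing
`{1,…,7} \ {p} = {q₁ < ⋯ < q₆}`, the row `(x(u_{q₁}^p), x(u_{q₂}^p), x(u_{q₃}^p))` is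
carried by `A^{(p)}[(q₁,q₂,q₃)→(q₄,q₅,q₆)]` to `(x(u_{q₄}^p), x(u_{q₅}^p), x(u_{q₆}^p))`. -/
noncomputable def Permitted {F : Type*} [Field F] (al be ga : Fin 7 → F)
    (x : Pent → F) : Prop :=
  ∀ p : Fin 7,
    Matrix.vecMul
        (fun n : Fin 3 => x (uPent p (qs p ⟨(n : ℕ), by have := n.isLt; omega⟩)
          (qs_ne p _)))
        (ansatz al be ga p
          (fun n : Fin 3 => qs p ⟨(n : ℕ), by have := n.isLt; omega⟩)
          (fun n : Fin 3 => qs p ⟨(n : ℕ) + 3, by have := n.isLt; omega⟩)) =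
      fun n : Fin 3 => x (uPent p (qs p ⟨(n : ℕ) + 3, by have := n.isLt; omega⟩)
        (qs_ne p _))

/-!
Fix a missing vertex `p`. The brackets `d_{ijp}` are those of a plane, so `o ↦ d_{aop} d_{bop}` is
a binary quadratic form, and the matrix `A^{(p)}` is Lagrange interpolation of such forms from
three of their values: it carries the edge vectors to themselves. Hence edge vectors are permitted.

Conversely, the input vertices `q₁, q₂, q₃` always lie among the first four vertices. So the values
of a permitted coloring on the six pentachora complementary to the edges of that tetrahedron
determine the values on every `u_q^p` with `p` among these four, which include the inputs at the
other three vertices. At the six pentachora an edge vector of the tetrahedron vanishes except at the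
one complementary to the opposite edge, so its six edge vectors form a basis of the permitted
colorings.
-/

section Interpolation

variable {ι R F : Type*} [CommRing R] [Field F]

theorem quadratic_interpolation_of_plucker {ω : ι → ι → R}
    (hω : ∀ a i j k, ω a i * ω j k - ω a j * ω i k + ω a k * ω i j = 0) (a b i j k o : ι) :
    ω a i * ω b i * (ω j o * ω k o) * ω j k - ω a j * ω b j * (ω i o * ω k o) * ω i k +
        ω a k * ω b k * (ω i o * ω j o) * ω i j =
      ω a o * ω b o * (ω i j * ω i k * ω j k) := by
  linear_combination ω b k * ω i o * ω j o * hω a i j k - ω b o * ω i k * ω j k * hω a i j o +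
    ω a i * ω j k * ω j o * hω b i k o - ω a j * ω i k * ω i o * hω b j k o

theorem sum_quadratic_interpolation_of_plucker {ω : ι → ι → F}
    (hanti : ∀ i j, ω i j = -ω j i)
    (hω : ∀ a i j k, ω a i * ω j k - ω a j * ω i k + ω a k * ω i j = 0)
    {q : Fin 3 → ι} (hq : Pairwise fun m n => ω (q m) (q n) ≠ 0) (a b o : ι) :
    ∑ m, ω a (q m) * ω b (q m) * (ω (q (m + 1)) o * ω (q (m + 2)) o /
        (ω (q m) (q (m + 1)) * ω (q m) (q (m + 2)))) = ω a o * ω b o := by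
  have h01 : ω (q 0) (q 1) ≠ 0 := hq (by decide)
  have h02 : ω (q 0) (q 2) ≠ 0 := hq (by decide)
  have h12 : ω (q 1) (q 2) ≠ 0 := hq (by decide)
  simp only [Fin.sum_univ_three, Fin.isValue, zero_add, Fin.reduceAdd]
  rw [hanti (q 1) (q 0), hanti (q 2) (q 0), hanti (q 2) (q 1)]
  field_simp
  linear_combination quadratic_interpolation_of_plucker hω a b (q 0) (q 1) (q 2) o

end Interpolation

theorem dualBases_of_eval_diagonal {ι K V : Type*} [Finite ι] [Field K] [AddCommGroup V]
    [Module K V] {e : ι → V} {ε : ι → Module.Dual K V} (hself : ∀ i, ε i (e i) ≠ 0)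
    (hne : Pairwise fun i j => ε i (e j) = 0) (htotal : ∀ v, (∀ i, ε i v = 0) → v = 0) :
    Module.DualBases e fun i => (ε i (e i))⁻¹ • ε i where
  eval_same i := inv_mul_cancel₀ (hself i)
  eval_of_ne i j hij := by simp [hne hij]
  total {v w} h := sub_eq_zero.1 <| htotal _ fun i => by
    have hi : ε i v = ε i w := mul_left_cancel₀ (inv_ne_zero (hself i)) (h i)
    rw [map_sub, hi, sub_self]

theorem sort_pair_eq_or {α : Type*} [LinearOrder α] {a b : α} (h : a ≠ b) :
    ({a, b} : Finset α).sort (· ≤ ·) = [a, b] ∨ ({a, b} : Finset α).sort (· ≤ ·) = [b, a] := by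
  rw [← List.perm_pair, ← Multiset.coe_eq_coe, Finset.sort_eq,
    Finset.insert_val_of_notMem (by simpa)]
  rfl

section Determinant

variable {F : Type*} [Field F] (al be ga : Fin 7 → F)

theorem dd_expand (i j k : Fin 7) :
    dd al be ga i j k = al i * be j * ga k - al i * be k * ga j - al j * be i * ga k
      + al j * be k * ga i + al k * be i * ga j - al k * be j * ga i := by
  simp [dd, Matrix.det_fin_three]

theorem dd_swap_left (i j k : Fin 7) : dd al be ga i j k = -dd al be ga j i k := by
  simp only [dd_expand]
  ring

theorem dd_swap_right (i j k : Fin 7) : dd al be ga i j k = -dd al be ga i k j := by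
  simp only [dd_expand]
  ring

theorem dd_self_left (i j : Fin 7) : dd al be ga i i j = 0 := by
  simp only [dd_expand]
  ring

theorem dd_self_outer (i j : Fin 7) : dd al be ga i j i = 0 := by
  rw [dd_swap_right, dd_self_left, neg_zero]

theorem dd_plucker (p a i j k : Fin 7) :
    dd al be ga a i p * dd al be ga j k p - dd al be ga a j p * dd al be ga i k p +
      dd al be ga a k p * dd al be ga i j p = 0 := by
  simp only [dd_expand]
  ring

end Determinant

theorem uPent_comm {p q : Fin 7} (h : q ≠ p) : uPent p q h = uPent q p h.symm :=
  Subtype.ext (congrArg compl (Finset.pair_comm p q))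

theorem exists_eq_uPent (u : Pent) : ∃ p q h, u = uPent p q h := by
  have hcard : u.1ᶜ.card = 2 := by simp [Finset.card_compl, u.2]
  obtain ⟨p, q, hpq, hu⟩ := Finset.card_eq_two.1 hcard
  exact ⟨p, q, hpq.symm, Subtype.ext (compl_eq_comm.1 hu).symm⟩

/-- The input triple `(q₁, q₂, q₃)` of the relation at `p`. -/
def inputVertex (p : Fin 7) (m : Fin 3) : Fin 7 := qs p (m.castAdd 3)

/-- The output triple `(q₄, q₅, q₆)` of the relation at `p`. -/
def outputVertex (p : Fin 7) (n : Fin 3) : Fin 7 := qs p (n.addNat 3)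

theorem inputVertex_ne (p : Fin 7) (m : Fin 3) : inputVertex p m ≠ p := qs_ne p _

theorem outputVertex_ne (p : Fin 7) (n : Fin 3) : outputVertex p n ≠ p := qs_ne p _

theorem inputVertex_injective (p : Fin 7) : Function.Injective (inputVertex p) := by
  revert p
  decide

theorem inputVertex_lt_four (p : Fin 7) (m : Fin 3) : inputVertex p m < 4 := by
  revert p m
  decide

theorem exists_inputVertex_or_outputVertex :
    ∀ p q : Fin 7, q ≠ p → (∃ m, inputVertex p m = q) ∨ ∃ n, outputVertex p n = q := by
  decide

section Colorings

variable {F : Type*} [Field F] {al be ga : Fin 7 → F} {x : Pent → F}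

theorem permitted_iff : Permitted al be ga x ↔ ∀ p n,
    ∑ m, x (uPent p (inputVertex p m) (inputVertex_ne p m)) *
        ansatz al be ga p (inputVertex p) (outputVertex p) m n =
      x (uPent p (outputVertex p n) (outputVertex_ne p n)) :=
  forall_congr' fun _ => funext_iff

theorem Permitted.apply_eq_zero_of_inputs (hx : Permitted al be ga x) {p : Fin 7}
    (hinput : ∀ m, x (uPent p (inputVertex p m) (inputVertex_ne p m)) = 0)
    {q : Fin 7} (hq : q ≠ p) : x (uPent p q hq) = 0 := by
  obtain ⟨m, rfl⟩ | ⟨n, rfl⟩ := exists_inputVertex_or_outputVertex p q hq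
  · exact hinput m
  · simp [← permitted_iff.1 hx p n, hinput]

theorem Permitted.eq_zero_of_lt_four (hx : Permitted al be ga x)
    (hlt : ∀ p q hq, p < 4 → q < 4 → x (uPent p q hq) = 0) : x = 0 := by
  have row_of_lt (p q : Fin 7) (hq : q ≠ p) (hp : p < 4) : x (uPent p q hq) = 0 :=
    hx.apply_eq_zero_of_inputs (fun m => hlt _ _ _ hp (inputVertex_lt_four p m)) hq
  have row (p q : Fin 7) (hq : q ≠ p) : x (uPent p q hq) = 0 :=
    hx.apply_eq_zero_of_inputs
      (fun m => uPent_comm (inputVertex_ne p m) ▸ row_of_lt _ _ _ (inputVertex_lt_four p m)) hq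
  funext u
  obtain ⟨p, q, hq, rfl⟩ := exists_eq_uPent u
  exact row p q hq

variable (al be ga) in
/-- The subspace of permitted colorings of `∂Δ⁶`. -/
def permittedColorings : Submodule F (Pent → F) where
  carrier := {x | Permitted al be ga x}
  zero_mem' _ := Matrix.zero_vecMul _
  add_mem' hx hy p := (Matrix.add_vecMul _ _ _).trans (congrArg₂ (· + ·) (hx p) (hy p))
  smul_mem' c _ hx p := (Matrix.smul_vecMul c _ _).trans (congrArg (c • ·) (hx p))

end Colorings

section EdgeVector

variable {F : Type*} [Field F] (al be ga : Fin 7 → F)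

/-- The edge vector `e_{ab}` as a coloring, that is, `eVec` restricted to pentachora. -/
noncomputable def edgeVector (a b : Fin 7) : Pent → F := fun u => eVec al be ga a b u.1

theorem edgeVector_uPent_eq_zero_of_mem {a b p q : Fin 7} (hq : q ≠ p)
    (h : a ∈ ({p, q} : Finset (Fin 7)) ∨ b ∈ ({p, q} : Finset (Fin 7))) :
    edgeVector al be ga a b (uPent p q hq) = 0 := by
  refine if_neg fun hu => ?_
  simp only [uPent, Finset.mem_compl] at hu
  tauto

theorem edgeVector_uPent (a b : Fin 7) {p q : Fin 7} (hq : q ≠ p) :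
    edgeVector al be ga a b (uPent p q hq) = dd al be ga a q p * dd al be ga b q p := by
  by_cases h : a ∈ ({p, q} : Finset (Fin 7)) ∨ b ∈ ({p, q} : Finset (Fin 7))
  · rw [edgeVector_uPent_eq_zero_of_mem al be ga hq h]
    simp only [Finset.mem_insert, Finset.mem_singleton] at h
    rcases h with (rfl | rfl) | (rfl | rfl) <;> simp [dd_self_left, dd_self_outer]
  · have hmem : a ∈ (uPent p q hq).1 ∧ b ∈ (uPent p q hq).1 := by
      simpa only [uPent, Finset.mem_compl, not_or] using h
    rw [edgeVector, eVec, if_pos hmem, uPent, compl_compl]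
    rcases sort_pair_eq_or hq.symm with hs | hs
    · simp [hs, dd_swap_right al be ga _ p q]
    · simp [hs]

variable {al be ga}
variable (hgen : ∀ i j k : Fin 7, i ≠ j → i ≠ k → j ≠ k → dd al be ga i j k ≠ 0)
include hgen

theorem edgeVector_mem_permittedColorings (a b : Fin 7) :
    edgeVector al be ga a b ∈ permittedColorings al be ga := by
  refine permitted_iff.2 fun p n => ?_
  have hq : Pairwise fun m m' => dd al be ga (inputVertex p m) (inputVertex p m') p ≠ 0 :=
    fun m m' h => hgen _ _ _ ((inputVertex_injective p).ne h) (inputVertex_ne p m)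
      (inputVertex_ne p m')
  simpa only [edgeVector_uPent, ansatz] using sum_quadratic_interpolation_of_plucker
    (ω := fun i j => dd al be ga i j p) (fun i j => dd_swap_left al be ga i j p)
    (dd_plucker al be ga p) hq a b (outputVertex p n)

theorem edgeVector_uPent_ne_zero {a b p q : Fin 7} (hq : q ≠ p) (ha : a ≠ p ∧ a ≠ q)
    (hb : b ≠ p ∧ b ≠ q) : edgeVector al be ga a b (uPent p q hq) ≠ 0 := by
  rw [edgeVector_uPent]
  exact mul_ne_zero (hgen _ _ _ ha.2 ha.1 hq) (hgen _ _ _ hb.2 hb.1 hq)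

end EdgeVector

/-- The edges of the tetrahedron on the first four vertices, ordered so that the edge opposite to
the `i`-th one is the `i.rev`-th one. -/
def tetraEdge : Fin 6 → Fin 7 × Fin 7 := ![(0, 1), (0, 2), (0, 3), (1, 2), (1, 3), (2, 3)]

theorem tetraEdge_ne : ∀ i, (tetraEdge i).2 ≠ (tetraEdge i).1 := by decide

/-- The pentachoron complementary to the `i`-th edge of the tetrahedron on the first four
vertices. -/
def tetraPent (i : Fin 6) : Pent := uPent (tetraEdge i).1 (tetraEdge i).2 (tetraEdge_ne i)

theorem exists_uPent_eq_tetraPent {p q : Fin 7} (hq : q ≠ p) (hp4 : p < 4) (hq4 : q < 4) :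
    ∃ i, uPent p q hq = tetraPent i := by
  have hedge : ∀ p q : Fin 7, q ≠ p → p < 4 → q < 4 →
      ∃ i, (p, q) = tetraEdge i ∨ (q, p) = tetraEdge i := by decide
  obtain ⟨i, hi | hi⟩ := hedge p q hq hp4 hq4
  · exact ⟨i, by simp only [tetraPent, ← hi]⟩
  · exact ⟨i, by simp only [tetraPent, ← hi, uPent_comm hq]⟩

section Basis

variable {F : Type*} [Field F] {al be ga : Fin 7 → F}

theorem Permitted.eq_zero_of_tetraPent {x : Pent → F} (hx : Permitted al be ga x)
    (hzero : ∀ i, x (tetraPent i) = 0) : x = 0 :=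
  hx.eq_zero_of_lt_four fun p q hq hp4 hq4 => by
    obtain ⟨i, hi⟩ := exists_uPent_eq_tetraPent hq hp4 hq4
    rw [hi, hzero]

variable (al be ga) in
theorem edgeVector_tetraEdge_rev_tetraPent_eq_zero_of_ne {i j : Fin 6} (h : i ≠ j) :
    edgeVector al be ga (tetraEdge i.rev).1 (tetraEdge i.rev).2 (tetraPent j) = 0 := by
  apply edgeVector_uPent_eq_zero_of_mem
  revert i j
  decide

variable (hgen : ∀ i j k : Fin 7, i ≠ j → i ≠ k → j ≠ k → dd al be ga i j k ≠ 0)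
include hgen

theorem edgeVector_tetraEdge_rev_tetraPent_ne_zero (i : Fin 6) :
    edgeVector al be ga (tetraEdge i.rev).1 (tetraEdge i.rev).2 (tetraPent i) ≠ 0 := by
  apply edgeVector_uPent_ne_zero hgen <;> revert i <;> decide

/-- The basis of the permitted colorings formed by the edge vectors of the tetrahedron on the first
four vertices. The `i`-th one belongs to the edge opposite to `tetraEdge i`, so that among the
pentachora `tetraPent j` it is nonzero exactly at `tetraPent i`. -/
noncomputable def tetraEdgeBasis : Module.Basis (Fin 6) F (permittedColorings al be ga) :=
  Module.DualBases.basis <| dualBases_of_eval_diagonal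
    (e := fun i => ⟨edgeVector al be ga (tetraEdge i.rev).1 (tetraEdge i.rev).2,
      edgeVector_mem_permittedColorings hgen _ _⟩)
    (ε := fun i => LinearMap.proj (tetraPent i) ∘ₗ (permittedColorings al be ga).subtype)
    (edgeVector_tetraEdge_rev_tetraPent_ne_zero hgen)
    (fun _ _ h => edgeVector_tetraEdge_rev_tetraPent_eq_zero_of_ne al be ga h.symm)
    (fun x hx => Subtype.ext (x.2.eq_zero_of_tetraPent hx))

theorem coe_tetraEdgeBasis (i : Fin 6) :
    (tetraEdgeBasis hgen i : Pent → F) =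
      edgeVector al be ga (tetraEdge i.rev).1 (tetraEdge i.rev).2 := by
  simp [tetraEdgeBasis]

theorem permittedColorings_eq_span :
    permittedColorings al be ga =
      Submodule.span F {v | ∃ a b, a ≠ b ∧ v = edgeVector al be ga a b} := by
  refine le_antisymm (fun x hx => ?_) (Submodule.span_le.2 ?_)
  · lift x to permittedColorings al be ga using hx
    rw [← (tetraEdgeBasis hgen).sum_repr x, Submodule.coe_sum]
    refine Submodule.sum_mem _ fun i _ => Submodule.smul_mem _ _ (Submodule.subset_span ?_)
    exact ⟨_, _, (tetraEdge_ne i.rev).symm, coe_tetraEdgeBasis hgen i⟩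
  · rintro _ ⟨a, b, -, rfl⟩
    exact edgeVector_mem_permittedColorings hgen a b

theorem finrank_permittedColorings : Module.finrank F (permittedColorings al be ga) = 6 := by
  rw [Module.finrank_eq_card_basis (tetraEdgeBasis hgen), Fintype.card_fin]

end Basis

/-- The permitted colorings of `∂Δ⁶` form an `F`-linear subspace of `F^{21}` of
dimension exactly 6, which coincides with the span of the 21 edge vectors. -/
theorem permitted_colorings_eq_span_edgeVectors {F : Type*} [Field F]
    (al be ga : Fin 7 → F)
    (hgen : ∀ i j k : Fin 7, i ≠ j → i ≠ k → j ≠ k → dd al be ga i j k ≠ 0) :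
    ∃ S : Submodule F (Pent → F),
      (∀ x : Pent → F, x ∈ S ↔ Permitted al be ga x) ∧
      Module.finrank F S = 6 ∧
      S = Submodule.span F
        {v : Pent → F | ∃ a b : Fin 7, a ≠ b ∧ v = fun u => eVec al be ga a b u.1} := by
  exact ⟨permittedColorings al be ga, fun _ => Iff.rfl, finrank_permittedColorings hgen,
    permittedColorings_eq_span hgen⟩
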